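/- Let K be a field and let (k_{11},…,k_{1m}), …, (k_{n1},…,k_{nm}) be n families of elements of K. The following are equivalent: (1) the set of vectors (p(k_{11},…,k_{1m}), …, p(k_{n1},…,k_{nm})) ∈ K^n, as p ranges over all symmetric polynomials in m variables over K, spans K^n; (2) for any two distinct indices i ≠ j, the family (k_{i1},…,k_{im}) cannot be obtained from (k_{j1},…,k_{jm}) by a permutation. -/

import Mathlib

/-!
Symmetric polynomials separate orbits: if every elementary symmetric polynomial takes the same
value on two families, then by Vieta both are the root multiset of the same polynomial, so they
differ by a permutation. Given pairwise non-equivalent families, choose for each `i ≠ j` a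
symmetric `q j` with `q j (k i) ≠ q j (k j)`; the product over `j ≠ i` of `q j - q j (k j)` is
symmetric and its evaluation vector is a nonzero multiple of the `i`-th standard basis vector.
Conversely, if two families are related by a permutation, every evaluation vector lies in the
proper subspace where the two coordinates agree.
-/

open MvPolynomial in
/-- Elementary symmetric polynomials separate multisets of size `m`. -/
theorem exists_perm_of_eval_esymm_eq {K : Type*} [Field K] {m : ℕ} {x y : Fin m → K}
    (h : ∀ d, eval x (esymm (Fin m) K d) = eval y (esymm (Fin m) K d)) :
    ∃ σ : Equiv.Perm (Fin m), ∀ t, x t = y (σ t) := by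
  have hs : ∀ d, (Finset.univ.val.map x).esymm d = (Finset.univ.val.map y).esymm d := by
    intro d
    rw [← aeval_esymm_eq_multiset_esymm (Fin m) K d x,
      ← aeval_esymm_eq_multiset_esymm (Fin m) K d y]
    simpa [aeval_eq_eval] using h d
  have hm : Finset.univ.val.map x = Finset.univ.val.map y := by
    rw [← Polynomial.roots_multiset_prod_X_sub_C (Finset.univ.val.map x),
      ← Polynomial.roots_multiset_prod_X_sub_C (Finset.univ.val.map y),
      Multiset.prod_X_sub_X_eq_sum_esymm, Multiset.prod_X_sub_X_eq_sum_esymm]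
    simp only [hs, Multiset.card_map]
  -- Equal multisets give fibres of equal size, hence fibrewise bijections.
  have hc : ∀ c, Nonempty ({a // x a = c} ≃ {b // y b = c}) := by
    classical
    intro c
    rw [← Fintype.card_eq, Fintype.card_subtype, Fintype.card_subtype]
    have := congrArg (Multiset.count c) hm
    simpa only [Multiset.count_map, Finset.card_def, Finset.filter_val, eq_comm] using this
  let e := fun c => (hc c).some
  exact ⟨Equiv.ofFiberEquiv e, fun t => (Equiv.ofFiberEquiv_map e t).symm⟩

/-- For `n` families `k i : Fin m → K`, the evaluation vectors
`(p(k 1), …, p(k n))` of symmetric polynomials `p` span `K^n` if and only if no two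
distinct families are related by a permutation. -/
theorem stmt6 (K : Type*) [Field K] (m n : ℕ) (k : Fin n → Fin m → K) :
    Submodule.span K {v : Fin n → K | ∃ p : MvPolynomial (Fin m) K,
        p.IsSymmetric ∧ v = fun i => MvPolynomial.eval (k i) p} = ⊤ ↔
      ∀ i j : Fin n, i ≠ j →
        ¬ ∃ σ : Equiv.Perm (Fin m), ∀ t, k i t = k j (σ t) := by
  constructor
  · rintro h i j hij ⟨σ, hσ⟩
    have hle : Submodule.span K {v : Fin n → K | ∃ p : MvPolynomial (Fin m) K,
        p.IsSymmetric ∧ v = fun i => MvPolynomial.eval (k i) p} ≤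
        LinearMap.eqLocus (LinearMap.proj i) (LinearMap.proj j) := by
      rw [Submodule.span_le]
      rintro v ⟨p, hp, rfl⟩
      have hk : k i = k j ∘ σ := funext hσ
      change MvPolynomial.eval (k i) p = MvPolynomial.eval (k j) p
      rw [hk, ← MvPolynomial.eval_rename, hp σ]
    have hmem := hle (h ▸ Submodule.mem_top : Pi.single i (1 : K) ∈ _)
    have h1 : (Pi.single i (1 : K) : Fin n → K) i = (Pi.single i (1 : K) : Fin n → K) j := hmem
    simp [hij.symm] at h1
  · intro h
    have hsep : ∀ i j, ∃ q : MvPolynomial (Fin m) K, q.IsSymmetric ∧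
        (i ≠ j → MvPolynomial.eval (k i) q ≠ MvPolynomial.eval (k j) q) := by
      intro i j
      by_contra! hc
      have hij : i ≠ j := (hc 0 (MvPolynomial.IsSymmetric.zero)).1
      exact h i j hij (exists_perm_of_eval_esymm_eq fun d =>
        (hc _ (MvPolynomial.esymm_isSymmetric _ _ d)).2)
    choose q hq hne using hsep
    rw [eq_top_iff, ← (Pi.basisFun K (Fin n)).span_eq, Submodule.span_le]
    rintro _ ⟨i, rfl⟩
    set P : MvPolynomial (Fin m) K := ∏ j ∈ Finset.univ.erase i,
      (q i j - MvPolynomial.C (MvPolynomial.eval (k j) (q i j))) with hP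
    have hPs : P.IsSymmetric := by
      rw [← MvPolynomial.mem_symmetricSubalgebra]
      exact Subalgebra.prod_mem _ fun j _ => (hq i j).sub (MvPolynomial.IsSymmetric.C _)
    have hPi : MvPolynomial.eval (k i) P ≠ 0 := by
      rw [hP, map_prod, Finset.prod_ne_zero_iff]
      intro j hj
      simpa [sub_eq_zero] using hne i j (Finset.ne_of_mem_erase hj).symm
    have hPj : ∀ j, j ≠ i → MvPolynomial.eval (k j) P = 0 := by
      intro j hj
      rw [hP, map_prod]
      exact Finset.prod_eq_zero (Finset.mem_erase.2 ⟨hj, Finset.mem_univ j⟩) (by simp)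
    have hv : Pi.basisFun K (Fin n) i =
        (MvPolynomial.eval (k i) P)⁻¹ • fun j => MvPolynomial.eval (k j) P := by
      ext j
      rcases eq_or_ne j i with rfl | hj
      · simp [hPi]
      · simp [hPj j hj, hj]
    rw [hv]
    exact Submodule.smul_mem _ _ (Submodule.subset_span ⟨P, hPs, rfl⟩)
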